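/- arXiv:2102.00536 — 8 statements merged into one kernel-verified Lean document; each statement's English description precedes it below -/
import Mathlib

section
/- Let A ∈ ℂ^{d×d} have a Jordan decomposition A = S J S⁻¹, where S ∈ ℂ^{d×d} is invertible and J = diag(J₀, …, J_{M−1}) is block diagonal with Jordan blocks J_j = λ_j I_{m_j} + N_{m_j} ∈ ℂ^{m_j×m_j} (N_{m_j} being the nilpotent matrix with ones on the superdiagonal and zeros elsewhere), Σ_{j=0}^{M−1} m_j = d. Partition ψ := S⁻¹ φ conformally into blocks ψ_j ∈ ℂ^{m_j}. Then {A^ℓ φ : ℓ = 0, …, d−1} is a basis of ℂ^d if and only if the eigenvalues λ₀, …, λ_{M−1} of the Jordan blocks are pairwise distinct and (ψ_j)_{m_j−1} ≠ 0 for every j = 0, …, M−1. -/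
/-!
After conjugating by `S`, the claim concerns the vectors `J ^ ℓ ψ`, `ℓ < d`. They are linearly
independent iff no nonzero polynomial `p` of degree `< d` satisfies `p(J) ψ = 0`; spanning is then
automatic because there are `d = dim` of them.

Extend the `j`-th block of a vector by zeros to a sequence `ℕ → ℂ` (`blockSeq`). This turns `J`
into `λ_j + E`, with `E` the left shift of sequences, so `p(J)` acts on the `j`-th block as
`p(λ_j + E)` and `(X - λ_j) ^ k` acts as `E ^ k`.

* If `p(J) ψ = 0` and the last coordinate of `ψ_j` is nonzero, then `(X - λ_j) ^ m_j ∣ p`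
  (`pow_dvd_of_aeval_eq_zero`). For distinct `λ_j` these factors are coprime, so their product, of
  degree `d`, divides `p`, whence `p = 0` if `deg p < d`.
* Conversely `p(J) ψ` vanishes on block `j` as soon as `(X - λ_j) ^ n ∣ p` and the coordinates of
  `ψ_j` of index at least `n` vanish. If `λ_a = λ_b` with `a ≠ b` and `m_a ≤ m_b`, the block `a`
  can be dropped from `∏ (X - λ_j) ^ m_j`; if the last coordinate of `ψ_a` is zero, one factor
  `X - λ_a` can be dropped. Either way a nonzero `p` of degree `< d` kills `ψ`.
-/

/-- The Jordan matrix `J = diag(J₀, …, J_{M-1})` with Jordan blocks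
`J_j = λ_j I_{m_j} + N_{m_j}`, as a matrix indexed by `Σ j : Fin M, Fin (m j)`. -/
def jordanMatrix {M : ℕ} (m : Fin M → ℕ) (lam : Fin M → ℂ) :
    Matrix (Σ j : Fin M, Fin (m j)) (Σ j : Fin M, Fin (m j)) ℂ :=
  fun p q =>
    if p.1 = q.1 then
      (if (q.2 : ℕ) = (p.2 : ℕ) then lam p.1
       else if (q.2 : ℕ) = (p.2 : ℕ) + 1 then 1 else 0)
    else 0

open Polynomial in
/-- The Krylov vectors `v, f v, …, f ^ (d - 1) v` are independent iff no nonzero polynomial of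
degree `< d` in `f` kills `v`. -/
lemma linearIndependent_pow_apply_iff {V : Type*} [AddCommGroup V] [Module ℂ V]
    (f : Module.End ℂ V) (v : V) (d : ℕ) :
    LinearIndependent ℂ (fun ℓ : Fin d => (f ^ (ℓ : ℕ)) v) ↔
      ∀ p : ℂ[X], p.degree < d → aeval f p v = 0 → p = 0 := by
  have key : ∀ p : ℂ[X], p.degree < d →
      aeval f p v = ∑ ℓ : Fin d, p.coeff ℓ • (f ^ (ℓ : ℕ)) v := by
    intro p hp
    have hp' : p = ∑ i ∈ Finset.range d, C (p.coeff i) * X ^ i := by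
      ext n
      simp only [finsetSum_coeff, coeff_C_mul_X_pow, Finset.sum_ite_eq, Finset.mem_range]
      split_ifs with h
      · rfl
      · exact coeff_eq_zero_of_degree_lt (hp.trans_le (by exact_mod_cast not_lt.mp h))
    conv_lhs => rw [hp']
    rw [Fin.sum_univ_eq_sum_range (fun ℓ => p.coeff ℓ • (f ^ ℓ) v) d]
    simp [LinearMap.sum_apply, Module.End.mul_apply, Module.algebraMap_end_apply]
  rw [Fintype.linearIndependent_iff]
  constructor
  · intro h p hp h0
    rw [key p hp] at h0
    ext n
    by_cases hn : n < d
    · simpa using h (fun ℓ => p.coeff ℓ) h0 ⟨n, hn⟩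
    · exact coeff_eq_zero_of_degree_lt (hp.trans_le (by exact_mod_cast not_lt.mp hn))
  · intro h g hg i
    let q : degreeLT ℂ d := (degreeLTEquiv ℂ d).symm g
    have hc : ∀ ℓ : Fin d, (q : ℂ[X]).coeff ℓ = g ℓ := fun ℓ =>
      congrFun ((degreeLTEquiv ℂ d).apply_symm_apply g) ℓ
    have hq : (q : ℂ[X]).degree < d := mem_degreeLT.mp q.2
    have hq0 := h q hq (by rw [key _ hq]; simpa only [hc] using hg)
    rw [← hc i, hq0, coeff_zero]

/-- The left shift `u ↦ (u (n + 1))ₙ` on sequences. -/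
def seqShift : Module.End ℂ (ℕ → ℂ) where
  toFun u n := u (n + 1)
  map_add' _ _ := rfl
  map_smul' _ _ := rfl

lemma seqShift_pow_apply (k : ℕ) (u : ℕ → ℂ) (n : ℕ) : (seqShift ^ k) u n = u (n + k) := by
  induction k generalizing n with
  | zero => simp
  | succ k ih =>
    rw [pow_succ', Module.End.mul_apply]
    change (seqShift ^ k) u (n + 1) = _
    rw [ih]
    congr 1
    omega

/-- The `j`-th block of a vector, extended by zeros to a sequence on `ℕ`. -/
def blockSeq {M : ℕ} (m : Fin M → ℕ) (j : Fin M) :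
    ((Σ j : Fin M, Fin (m j)) → ℂ) →ₗ[ℂ] (ℕ → ℂ) where
  toFun v n := if h : n < m j then v ⟨j, ⟨n, h⟩⟩ else 0
  map_add' v w := by
    ext n
    by_cases h : n < m j <;> simp [h]
  map_smul' c v := by
    ext n
    by_cases h : n < m j <;> simp [h]

lemma blockSeq_of_lt {M : ℕ} {m : Fin M → ℕ} {j : Fin M} {n : ℕ} (h : n < m j)
    (v : (Σ j : Fin M, Fin (m j)) → ℂ) : blockSeq m j v n = v ⟨j, ⟨n, h⟩⟩ :=
  dif_pos h

lemma blockSeq_of_le {M : ℕ} {m : Fin M → ℕ} {j : Fin M} {n : ℕ} (h : m j ≤ n)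
    (v : (Σ j : Fin M, Fin (m j)) → ℂ) : blockSeq m j v n = 0 :=
  dif_neg (not_lt.mpr h)

lemma eq_zero_of_blockSeq {M : ℕ} {m : Fin M → ℕ} {v : (Σ j : Fin M, Fin (m j)) → ℂ}
    (h : ∀ j, blockSeq m j v = 0) : v = 0 := by
  ext ⟨j, i⟩
  have := congrFun (h j) i
  rwa [blockSeq_of_lt i.2] at this

lemma jordanMatrix_mulVec {M : ℕ} (m : Fin M → ℕ) (lam : Fin M → ℂ)
    (v : (Σ j : Fin M, Fin (m j)) → ℂ) (j : Fin M) (i : Fin (m j)) :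
    (jordanMatrix m lam).mulVec v ⟨j, i⟩ =
      lam j * v ⟨j, i⟩ + blockSeq m j v (i + 1) := by
  simp only [Matrix.mulVec, dotProduct, jordanMatrix]
  rw [Fintype.sum_sigma, Finset.sum_eq_single j]
  · have hsplit : ∀ x : Fin (m j),
        (if (x : ℕ) = i then lam j else if (x : ℕ) = i + 1 then (1 : ℂ) else 0) * v ⟨j, x⟩ =
        (if x = i then lam j * v ⟨j, i⟩ else 0) +
          (if (x : ℕ) = i + 1 then v ⟨j, x⟩ else 0) := by
      intro x
      by_cases h : x = i
      · subst h; simp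
      · have h' : (x : ℕ) ≠ i := fun e => h (Fin.ext e)
        simp [h, h']
    simp only [if_true, hsplit, Finset.sum_add_distrib, Finset.sum_ite_eq', Finset.mem_univ]
    congr 1
    by_cases h : (i : ℕ) + 1 < m j
    · rw [blockSeq_of_lt h, Finset.sum_eq_single ⟨i + 1, h⟩]
      · simp
      · intro b _ hb
        exact if_neg fun e => hb (Fin.ext e)
      · simp
    · rw [blockSeq_of_le (not_lt.mp h)]
      refine Finset.sum_eq_zero fun x _ => if_neg fun e => h ?_
      rw [← e]
      exact x.2
  · intro b _ hb
    refine Finset.sum_eq_zero fun x _ => ?_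
    simp [Ne.symm hb]
  · simp

/-- On the `j`-th block, `J` acts as `λ_j + E`. -/
lemma blockSeq_jordanMatrix {M : ℕ} (m : Fin M → ℕ) (lam : Fin M → ℂ)
    (v : (Σ j : Fin M, Fin (m j)) → ℂ) (j : Fin M) :
    blockSeq m j ((jordanMatrix m lam).mulVecLin v) =
      (algebraMap ℂ (Module.End ℂ (ℕ → ℂ)) (lam j) + seqShift) (blockSeq m j v) := by
  ext n
  rw [LinearMap.add_apply, Pi.add_apply, Module.algebraMap_end_apply, Pi.smul_apply, smul_eq_mul]
  change _ = _ + blockSeq m j v (n + 1)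
  by_cases h : n < m j
  · rw [blockSeq_of_lt h, blockSeq_of_lt h, Matrix.mulVecLin_apply, jordanMatrix_mulVec]
  · rw [not_lt] at h
    rw [blockSeq_of_le h, blockSeq_of_le h, blockSeq_of_le (by omega)]
    simp

open Polynomial in
lemma blockSeq_aeval {M : ℕ} (m : Fin M → ℕ) (lam : Fin M → ℂ) (j : Fin M) (p : ℂ[X])
    (v : (Σ j : Fin M, Fin (m j)) → ℂ) :
    blockSeq m j (aeval (jordanMatrix m lam).mulVecLin p v) =
      aeval (algebraMap ℂ (Module.End ℂ (ℕ → ℂ)) (lam j) + seqShift) p (blockSeq m j v) := by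
  induction p using Polynomial.induction_on' generalizing v with
  | add p q hp hq => simp only [map_add, LinearMap.add_apply, hp, hq]
  | monomial n a =>
    simp only [aeval_monomial, Module.End.mul_apply, Module.algebraMap_end_apply, map_smul]
    congr 1
    induction n generalizing v with
    | zero => rfl
    | succ n ih =>
      rw [pow_succ, pow_succ, Module.End.mul_apply, Module.End.mul_apply, ih,
        blockSeq_jordanMatrix]

open Polynomial in
/-- On the `j`-th block, `(X - λ_j) ^ k` acts as the `k`-fold shift. -/
lemma blockSeq_aeval_pow_mul {M : ℕ} (m : Fin M → ℕ) (lam : Fin M → ℂ) (j : Fin M) (k : ℕ)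
    (q : ℂ[X]) (v : (Σ j : Fin M, Fin (m j)) → ℂ) (n : ℕ) :
    blockSeq m j (aeval (jordanMatrix m lam).mulVecLin ((X - C (lam j)) ^ k * q) v) n =
      blockSeq m j (aeval (jordanMatrix m lam).mulVecLin q v) (n + k) := by
  rw [blockSeq_aeval, blockSeq_aeval, map_mul, Module.End.mul_apply, map_pow, map_sub, aeval_X,
    aeval_C, add_sub_cancel_left, seqShift_pow_apply]

open Polynomial in
/-- `q(J)` multiplies the last coordinate of the `j`-th block by `q(λ_j)`. -/
lemma blockSeq_aeval_last {M : ℕ} (m : Fin M → ℕ) (lam : Fin M → ℂ) (j : Fin M)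
    (hj : 1 ≤ m j) (q : ℂ[X]) (v : (Σ j : Fin M, Fin (m j)) → ℂ) :
    blockSeq m j (aeval (jordanMatrix m lam).mulVecLin q v) (m j - 1) =
      q.eval (lam j) * blockSeq m j v (m j - 1) := by
  -- The remainder `(X - λ_j) * r` contributes the coordinate of index `m j`, which is zero.
  obtain ⟨r, hr⟩ := X_sub_C_dvd_sub_C_eval (a := lam j) (p := q)
  have hq : q = (X - C (lam j)) ^ 1 * r + C (q.eval (lam j)) := by
    rw [pow_one, ← hr, sub_add_cancel]
  conv_lhs => rw [hq]
  rw [map_add, LinearMap.add_apply, map_add, Pi.add_apply, blockSeq_aeval_pow_mul,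
    blockSeq_of_le (by omega), zero_add, aeval_C, Module.algebraMap_end_apply, map_smul,
    Pi.smul_apply, smul_eq_mul]

open Polynomial in
/-- A polynomial killing `v` under `J` is divisible by `(X - λ_j) ^ m_j` when the last coordinate
of the `j`-th block of `v` is nonzero. -/
lemma pow_dvd_of_aeval_eq_zero {M : ℕ} (m : Fin M → ℕ) (lam : Fin M → ℂ) (j : Fin M)
    (v : (Σ j : Fin M, Fin (m j)) → ℂ) (hv : blockSeq m j v (m j - 1) ≠ 0) (p : ℂ[X])
    (hp : aeval (jordanMatrix m lam).mulVecLin p v = 0) :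
    (X - C (lam j)) ^ m j ∣ p := by
  suffices h : ∀ k ≤ m j, (X - C (lam j)) ^ k ∣ p from h _ le_rfl
  intro k
  induction k with
  | zero => simp
  | succ k ih =>
    intro hk
    obtain ⟨q, rfl⟩ := ih (by omega)
    -- Shifting by `k` moves the last coordinate to position `m j - 1 - k`.
    have h1 := blockSeq_aeval_pow_mul m lam j k q v (m j - 1 - k)
    rw [hp, map_zero, Pi.zero_apply, Nat.sub_add_cancel (by omega),
      blockSeq_aeval_last m lam j (by omega)] at h1
    have h2 : q.eval (lam j) = 0 := (mul_eq_zero.mp h1.symm).resolve_right hv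
    rw [pow_succ]
    exact mul_dvd_mul_left _ (dvd_iff_isRoot.mpr h2)

open Polynomial in
/-- `p(J) v` vanishes on block `j` if `(X - λ_j) ^ n ∣ p` and the block is supported on indices
below `n`. -/
lemma blockSeq_aeval_eq_zero {M : ℕ} (m : Fin M → ℕ) (lam : Fin M → ℂ) (j : Fin M) (n : ℕ)
    (v : (Σ j : Fin M, Fin (m j)) → ℂ) (hv : ∀ i, n ≤ i → blockSeq m j v i = 0) (p : ℂ[X])
    (hp : (X - C (lam j)) ^ n ∣ p) :
    blockSeq m j (aeval (jordanMatrix m lam).mulVecLin p v) = 0 := by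
  obtain ⟨q, rfl⟩ := hp
  have h0 : blockSeq m j (aeval (jordanMatrix m lam).mulVecLin ((X - C (lam j)) ^ n) v) = 0 := by
    ext i
    have h := blockSeq_aeval_pow_mul m lam j n 1 v i
    rw [mul_one, map_one, Module.End.one_apply] at h
    rw [h, hv _ (by omega), Pi.zero_apply]
  rw [mul_comm, map_mul, Module.End.mul_apply, blockSeq_aeval, h0, map_zero]

open Polynomial in
/-- The statement for the Jordan matrix itself, in terms of annihilating polynomials. -/
lemma jordan_annihilator_iff {M : ℕ} (m : Fin M → ℕ) (hm : ∀ j, 1 ≤ m j) (lam : Fin M → ℂ)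
    (v : (Σ j : Fin M, Fin (m j)) → ℂ) :
    (∀ p : ℂ[X], p.degree < (∑ j, m j : ℕ) →
        aeval (jordanMatrix m lam).mulVecLin p v = 0 → p = 0) ↔
      (Function.Injective lam ∧ ∀ j, blockSeq m j v (m j - 1) ≠ 0) := by
  have hmonic : ∀ e : Fin M → ℕ, (∏ k, (X - C (lam k)) ^ e k).Monic := fun e =>
    monic_prod_of_monic _ _ fun k _ => (monic_X_sub_C _).pow _
  have hdeg : ∀ e : Fin M → ℕ, (∏ k, (X - C (lam k)) ^ e k).degree = ((∑ k, e k : ℕ) : WithBot ℕ) := by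
    intro e
    simp [degree_prod]
  constructor
  · intro h
    -- No exponent vector `e` of total degree `< d` gives a polynomial killing every block.
    have main : ∀ e : Fin M → ℕ, ∑ k, e k < ∑ k, m k →
        ¬ ∀ j, blockSeq m j (aeval (jordanMatrix m lam).mulVecLin
          (∏ k, (X - C (lam k)) ^ e k) v) = 0 := by
      intro e he h0
      refine (hmonic e).ne_zero (h _ ?_ (eq_zero_of_blockSeq h0))
      rw [hdeg]
      exact_mod_cast he
    have hupd : ∀ (a : Fin M) (n : ℕ), n < m a →
        ∑ k, Function.update m a n k < ∑ k, m k := by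
      intro a n hn
      refine Finset.sum_lt_sum (fun k _ => ?_) ⟨a, Finset.mem_univ _, by simpa using hn⟩
      by_cases hk : k = a
      · subst hk; simpa using hn.le
      · simp [hk]
    have hdvd : ∀ (e : Fin M → ℕ) (k : Fin M),
        (X - C (lam k)) ^ e k ∣ ∏ k, (X - C (lam k)) ^ e k := fun e k =>
      Finset.dvd_prod_of_mem (fun k => (X - C (lam k)) ^ e k) (Finset.mem_univ k)
    constructor
    · have aux : ∀ a b, m a ≤ m b → lam a = lam b → a = b := by
        intro a b hab hl
        by_contra hne
        refine main _ (hupd a 0 (hm a)) fun j => ?_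
        refine blockSeq_aeval_eq_zero m lam j (m j) v (fun i hi => blockSeq_of_le hi v) _ ?_
        by_cases hj : j = a
        · subst hj
          have := hdvd (Function.update m j 0) b
          rw [Function.update_of_ne (Ne.symm hne)] at this
          rw [hl]
          exact (pow_dvd_pow _ hab).trans this
        · have := hdvd (Function.update m a 0) j
          rwa [Function.update_of_ne hj] at this
      intro a b hl
      rcases le_total (m a) (m b) with h' | h'
      · exact aux a b h' hl
      · exact (aux b a h' hl.symm).symm
    · intro a ha
      have hma := hm a
      refine main _ (hupd a (m a - 1) (by omega)) fun j => ?_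
      refine blockSeq_aeval_eq_zero m lam j _ v (fun i hi => ?_) _
        (hdvd (Function.update m a (m a - 1)) j)
      by_cases hj : j = a
      · subst hj
        rw [Function.update_self] at hi
        rcases hi.eq_or_lt with rfl | hi
        · exact ha
        · exact blockSeq_of_le (by omega) v
      · rw [Function.update_of_ne hj] at hi
        exact blockSeq_of_le hi v
  · rintro ⟨hinj, hlast⟩ p hp h0
    have hdvd : ∏ k, (X - C (lam k)) ^ m k ∣ p :=
      Finset.prod_dvd_of_coprime
        (fun a _ b _ hab => (pairwise_coprime_X_sub_C hinj hab).pow)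
        (fun k _ => pow_dvd_of_aeval_eq_zero m lam k v (hlast k) p h0)
    exact eq_zero_of_dvd_of_degree_lt hdvd (by rwa [hdeg])

open Matrix in
/-- **Dynamical basis.** Let `A = S J S⁻¹` be a Jordan decomposition with blocks of sizes
`m j ≥ 1` and eigenvalues `λ j`, `d = ∑ j, m j`, and `ψ = S⁻¹ φ` partitioned conformally.
Then `{A^ℓ φ}_{ℓ=0}^{d-1}` is a basis of `ℂ^d` iff the eigenvalues of the Jordan blocks are
pairwise distinct and the last coordinate of each block `ψ_j` is nonzero. -/
theorem dynamical_basis (M : ℕ) (m : Fin M → ℕ) (hm : ∀ j, 1 ≤ m j) (lam : Fin M → ℂ)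
    (d : ℕ) (hd : d = ∑ j, m j)
    (A S : Matrix (Σ j : Fin M, Fin (m j)) (Σ j : Fin M, Fin (m j)) ℂ)
    (hS : IsUnit S.det) (φ : (Σ j : Fin M, Fin (m j)) → ℂ)
    (hA : A = S * jordanMatrix m lam * S⁻¹) :
    (LinearIndependent ℂ (fun ℓ : Fin d => (A ^ (ℓ : ℕ)).mulVec φ) ∧
        Submodule.span ℂ (Set.range fun ℓ : Fin d => (A ^ (ℓ : ℕ)).mulVec φ) = ⊤) ↔
      (Function.Injective lam ∧
        ∀ j : Fin M, S⁻¹.mulVec φ ⟨j, ⟨m j - 1, Nat.sub_lt (hm j) Nat.one_pos⟩⟩ ≠ 0) := by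
  subst hd
  have hinv : S⁻¹ * S = 1 := Matrix.nonsing_inv_mul S hS
  have hinv' : S * S⁻¹ = 1 := Matrix.mul_nonsing_inv S hS
  have hpow : ∀ ℓ : ℕ, (A ^ ℓ).mulVec φ =
      S.mulVecLin (((jordanMatrix m lam).mulVecLin ^ ℓ) (S⁻¹.mulVec φ)) := by
    intro ℓ
    induction ℓ with
    | zero => simp [hinv']
    | succ n ih =>
      rw [pow_succ', ← Matrix.mulVec_mulVec, ih, pow_succ', Module.End.mul_apply, hA]
      simp only [Matrix.mulVecLin_apply, Matrix.mulVec_mulVec, Matrix.mul_assoc, hinv,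
        Matrix.mul_one]
  have hker : LinearMap.ker S.mulVecLin = ⊥ := by
    rw [LinearMap.ker_eq_bot]
    intro x y hxy
    simpa [hinv] using congrArg S⁻¹.mulVec hxy
  have hLI : LinearIndependent ℂ (fun ℓ : Fin (∑ j, m j) => (A ^ (ℓ : ℕ)).mulVec φ) ↔
      (Function.Injective lam ∧
        ∀ j, blockSeq m j (S⁻¹.mulVec φ) (m j - 1) ≠ 0) := by
    rw [← jordan_annihilator_iff m hm lam, ← linearIndependent_pow_apply_iff]
    simp only [hpow]
    exact LinearMap.linearIndependent_iff S.mulVecLin hker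
  have hlast : ∀ j, blockSeq m j (S⁻¹.mulVec φ) (m j - 1) =
      S⁻¹.mulVec φ ⟨j, ⟨m j - 1, Nat.sub_lt (hm j) Nat.one_pos⟩⟩ := fun j =>
    blockSeq_of_lt _ _
  simp only [hlast] at hLI
  rw [← hLI]
  refine ⟨And.left, fun h => ⟨h, h.span_eq_top_of_card_eq_finrank' ?_⟩⟩
  simp
end

section
/- Let L ≥ d and let A ∈ ℂ^{d×d} have a Jordan decomposition A = S J S⁻¹, where S ∈ ℂ^{d×d} is invertible and J = diag(J₀, …, J_{M−1}) is block diagonal with Jordan blocks J_j = λ_j I_{m_j} + N_{m_j} ∈ ℂ^{m_j×m_j} (N_{m_j} being the nilpotent matrix with ones on the superdiagonal and zeros elsewhere), Σ_{j=0}^{M−1} m_j = d. Partition ψ := S⁻¹ φ conformally into blocks ψ_j ∈ ℂ^{m_j}. Then the family {A^ℓ φ : ℓ = 0, …, L−1} spans ℂ^d if and only if the eigenvalues λ₀, …, λ_{M−1} of the Jordan blocks are pairwise distinct and (ψ_j)_{m_j−1} ≠ 0 for every j = 0, …, M−1. -/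
open Matrix Polynomial in
theorem jordan_mulVec {M : ℕ} (m : Fin M → ℕ) (lam : Fin M → ℂ)
    (v : (Σ j : Fin M, Fin (m j)) → ℂ) (j : Fin M) (i : Fin (m j)) :
    (jordanMatrix m lam *ᵥ v) ⟨j, i⟩ =
      lam j * v ⟨j, i⟩ + if h : (i : ℕ) + 1 < m j then v ⟨j, ⟨i + 1, h⟩⟩ else 0 := by
  have h1 : (jordanMatrix m lam *ᵥ v) ⟨j, i⟩ = ∑ b : Fin (m j),
      ((if b = i then lam j * v ⟨j, b⟩ else 0) +
        (if (b : ℕ) = i + 1 then v ⟨j, b⟩ else 0)) := by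
    simp only [mulVec, dotProduct, Fintype.sum_sigma]
    rw [Finset.sum_eq_single j]
    · refine Finset.sum_congr rfl fun b _ => ?_
      simp only [jordanMatrix, if_true, Fin.ext_iff]
      split_ifs <;> first | omega | simp
    · intro b _ hb
      refine Finset.sum_eq_zero fun c _ => ?_
      simp [jordanMatrix, hb.symm]
    · simp
  rw [h1, Finset.sum_add_distrib]
  congr 1
  · simp
  · split_ifs with h
    · rw [Finset.sum_eq_single ⟨i + 1, h⟩]
      · simp
      · intro b _ hb
        rw [if_neg]
        exact fun hc => hb (Fin.ext hc)
      · simp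
    · refine Finset.sum_eq_zero fun b _ => if_neg ?_
      have := b.2
      omega

open Matrix Polynomial in
theorem jordan_pow_last {M : ℕ} (m : Fin M → ℕ) (lam : Fin M → ℂ)
    (v : (Σ j : Fin M, Fin (m j)) → ℂ) (j : Fin M) (i : Fin (m j)) (hi : (i : ℕ) + 1 = m j)
    (n : ℕ) :
    ((jordanMatrix m lam ^ n) *ᵥ v) ⟨j, i⟩ = lam j ^ n * v ⟨j, i⟩ := by
  induction n with
  | zero => simp
  | succ n ih =>
    rw [pow_succ', ← mulVec_mulVec, jordan_mulVec, ih, dif_neg (by omega)]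
    ring

open Matrix Polynomial in
/-- Evaluation at the last coordinate of a block is a left eigenvector of the Jordan matrix. -/
theorem aeval_jordan_last {M : ℕ} (m : Fin M → ℕ) (lam : Fin M → ℂ)
    (v : (Σ j : Fin M, Fin (m j)) → ℂ) (j : Fin M) (i : Fin (m j)) (hi : (i : ℕ) + 1 = m j)
    (q : ℂ[X]) :
    (aeval (jordanMatrix m lam) q *ᵥ v) ⟨j, i⟩ = q.eval (lam j) * v ⟨j, i⟩ := by
  induction q using Polynomial.induction_on' with
  | add p q hp hq => simp only [map_add, add_mulVec, Pi.add_apply, hp, hq, eval_add, add_mul]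
  | monomial n a =>
    rw [aeval_monomial, ← Algebra.smul_def, smul_mulVec, Pi.smul_apply,
      jordan_pow_last m lam v j i hi, eval_monomial, smul_eq_mul, mul_assoc]

open Matrix Polynomial in
/-- On block `j`, the polynomial `(X - λ_j) ^ k` in the Jordan matrix acts as a shift by `k`. -/
theorem jordan_sub_pow_mulVec {M : ℕ} (m : Fin M → ℕ) (lam : Fin M → ℂ) (j : Fin M) (k : ℕ) :
    ∀ (v : (Σ j : Fin M, Fin (m j)) → ℂ) (i : ℕ) (h : i + k < m j),
    (aeval (jordanMatrix m lam) ((X - C (lam j)) ^ k) *ᵥ v) ⟨j, ⟨i, by omega⟩⟩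
      = v ⟨j, ⟨i + k, h⟩⟩ := by
  induction k with
  | zero => intro v i h; simp
  | succ k ih =>
    intro v i h
    rw [pow_succ, map_mul, ← mulVec_mulVec, ih _ i (by omega), map_sub, aeval_X, aeval_C,
      sub_mulVec, Pi.sub_apply, jordan_mulVec, dif_pos (by simpa [add_assoc] using h),
      Algebra.algebraMap_eq_smul_one, smul_mulVec, one_mulVec]
    simp [add_assoc]

open Matrix Polynomial in
theorem pow_dvd_of_aeval_mulVec_eq_zero {M : ℕ} (m : Fin M → ℕ) (lam : Fin M → ℂ)
    (v : (Σ j : Fin M, Fin (m j)) → ℂ) (j : Fin M) (i : Fin (m j)) (hi : (i : ℕ) + 1 = m j)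
    (hv : v ⟨j, i⟩ ≠ 0) (p : ℂ[X]) (hp : aeval (jordanMatrix m lam) p *ᵥ v = 0) :
    (X - C (lam j)) ^ m j ∣ p := by
  by_cases hp0 : p = 0
  · simp [hp0]
  by_contra hdvd
  obtain ⟨q, hpq, hq⟩ := exists_eq_pow_rootMultiplicity_mul_and_not_dvd p hp0 (lam j)
  have hk : p.rootMultiplicity (lam j) < m j := by
    by_contra hle
    exact hdvd ((pow_dvd_pow _ (not_lt.mp hle)).trans (pow_rootMultiplicity_dvd p _))
  generalize p.rootMultiplicity (lam j) = k at hpq hk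
  have hz : (aeval (jordanMatrix m lam) p *ᵥ v) ⟨j, ⟨m j - 1 - k, by omega⟩⟩ = 0 := by
    rw [hp]; rfl
  rw [hpq, map_mul, ← mulVec_mulVec, jordan_sub_pow_mulVec m lam j k _ _ (by omega),
    aeval_jordan_last m lam v j _ (by simp only []; omega)] at hz
  have hi' : (⟨m j - 1 - k + k, by omega⟩ : Fin (m j)) = i := Fin.ext (by simp only []; omega)
  rw [hi'] at hz
  exact (mul_ne_zero (fun h => hq (dvd_iff_isRoot.mpr h)) hv) hz

open Matrix Polynomial in
theorem span_jordan_eq_top {M : ℕ} (m : Fin M → ℕ) (lam : Fin M → ℂ) (L : ℕ)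
    (hL : ∑ j, m j ≤ L) (v : (Σ j : Fin M, Fin (m j)) → ℂ) (hlam : Function.Injective lam)
    (last : ∀ j, Fin (m j)) (hlast : ∀ j, (last j : ℕ) + 1 = m j)
    (hv : ∀ j, v ⟨j, last j⟩ ≠ 0) :
    Submodule.span ℂ (Set.range fun ℓ : Fin L => (jordanMatrix m lam ^ (ℓ : ℕ)) *ᵥ v) = ⊤ := by
  let T : degreeLT ℂ (∑ j, m j) →ₗ[ℂ] ((Σ j : Fin M, Fin (m j)) → ℂ) :=
    { toFun := fun p => aeval (jordanMatrix m lam) (p : ℂ[X]) *ᵥ v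
      map_add' := fun p q => by simp [add_mulVec]
      map_smul' := fun c p => by simp [smul_mulVec] }
  have hinj : Function.Injective T := by
    rw [injective_iff_map_eq_zero]
    rintro ⟨p, hpd⟩ hp
    have hprod : ∏ j, (X - C (lam j)) ^ m j ∣ p := by
      refine Finset.prod_dvd_of_coprime (fun a _ b _ hab => ?_) fun j _ =>
        pow_dvd_of_aeval_mulVec_eq_zero m lam v j (last j) (hlast j) (hv j) p hp
      exact (isCoprime_X_sub_C_of_isUnit_sub
        (sub_ne_zero.mpr (hlam.ne hab)).isUnit).pow
    refine Subtype.ext (eq_zero_of_dvd_of_degree_lt hprod ?_)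
    have hdeg : (∏ j, (X - C (lam j)) ^ m j).degree = ((∑ j, m j : ℕ) : WithBot ℕ) := by
      simp [degree_prod]
    rw [hdeg]
    exact mem_degreeLT.mp hpd
  have hsurj : Function.Surjective T := by
    refine (LinearMap.injective_iff_surjective_of_finrank_eq_finrank ?_).mp hinj
    rw [(degreeLTEquiv ℂ _).finrank_eq]
    simp
  rw [eq_top_iff]
  intro w _
  obtain ⟨⟨p, hpd⟩, rfl⟩ := hsurj w
  change aeval (jordanMatrix m lam) p *ᵥ v ∈ _
  by_cases hp0 : p = 0
  · simp [hp0]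
  have hlt : p.natDegree < ∑ j, m j :=
    (natDegree_lt_iff_degree_lt hp0).mpr (mem_degreeLT.mp hpd)
  rw [aeval_eq_sum_range' (hlt.trans_le hL), sum_mulVec]
  refine Submodule.sum_mem _ fun n hn => ?_
  rw [smul_mulVec]
  exact Submodule.smul_mem _ _ (Submodule.subset_span ⟨⟨n, Finset.mem_range.mp hn⟩, rfl⟩)

open Matrix in
/-- Necessity for the Jordan matrix. A functional vanishing on all `J ^ ℓ v` is zero, which is
applied to a last coordinate and to combinations of two last coordinates with equal eigenvalue. -/
theorem of_span_jordan_eq_top {M : ℕ} (m : Fin M → ℕ) (lam : Fin M → ℂ) (L : ℕ)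
    (v : (Σ j : Fin M, Fin (m j)) → ℂ)
    (last : ∀ j, Fin (m j)) (hlast : ∀ j, (last j : ℕ) + 1 = m j)
    (h : Submodule.span ℂ
      (Set.range fun ℓ : Fin L => (jordanMatrix m lam ^ (ℓ : ℕ)) *ᵥ v) = ⊤) :
    Function.Injective lam ∧ ∀ j, v ⟨j, last j⟩ ≠ 0 := by
  have key : ∀ f : ((Σ j : Fin M, Fin (m j)) → ℂ) →ₗ[ℂ] ℂ,
      (∀ ℓ : ℕ, f ((jordanMatrix m lam ^ ℓ) *ᵥ v) = 0) → f = 0 := by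
    intro f hf
    refine LinearMap.ext_on_range h fun ℓ => ?_
    simpa using hf ℓ
  have hne : ∀ j, v ⟨j, last j⟩ ≠ 0 := by
    intro j hj
    have h0 := key (LinearMap.proj ⟨j, last j⟩) fun ℓ => by
      simp [jordan_pow_last m lam v j (last j) (hlast j), hj]
    have := LinearMap.congr_fun h0 (Pi.single ⟨j, last j⟩ 1)
    simp at this
  refine ⟨fun a b hab => ?_, hne⟩
  by_contra hne'
  have h0 := key (v ⟨a, last a⟩ • LinearMap.proj ⟨b, last b⟩
      - v ⟨b, last b⟩ • LinearMap.proj ⟨a, last a⟩) fun ℓ => by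
    simp [jordan_pow_last m lam v _ _ (hlast _), hab]
    ring
  have := LinearMap.congr_fun h0 (Pi.single ⟨b, last b⟩ 1)
  simp [hne'] at this
  exact hne a this

open Matrix in
/-- **Dynamical frame.** Let `L ≥ d` and `A = S J S⁻¹` be a Jordan decomposition with blocks of
sizes `m j ≥ 1` and eigenvalues `λ j`, `d = ∑ j, m j`, and `ψ = S⁻¹ φ` partitioned conformally.
Then `{A^ℓ φ}_{ℓ=0}^{L-1}` spans `ℂ^d` iff the eigenvalues of the Jordan blocks are pairwise
distinct and the last coordinate of each block `ψ_j` is nonzero. -/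
theorem dynamical_frame (M : ℕ) (m : Fin M → ℕ) (hm : ∀ j, 1 ≤ m j) (lam : Fin M → ℂ)
    (d L : ℕ) (hd : d = ∑ j, m j) (hL : d ≤ L)
    (A S : Matrix (Σ j : Fin M, Fin (m j)) (Σ j : Fin M, Fin (m j)) ℂ)
    (hS : IsUnit S.det) (φ : (Σ j : Fin M, Fin (m j)) → ℂ)
    (hA : A = S * jordanMatrix m lam * S⁻¹) :
    Submodule.span ℂ (Set.range fun ℓ : Fin L => (A ^ (ℓ : ℕ)).mulVec φ) = ⊤ ↔
      (Function.Injective lam ∧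
        ∀ j : Fin M, S⁻¹.mulVec φ ⟨j, ⟨m j - 1, Nat.sub_lt (hm j) Nat.one_pos⟩⟩ ≠ 0) := by
  have hpow : ∀ n : ℕ, A ^ n = S * jordanMatrix m lam ^ n * S⁻¹ := by
    intro n
    induction n with
    | zero => simp [mul_nonsing_inv S hS]
    | succ n ih =>
      rw [pow_succ, ih, hA, pow_succ]
      simp only [Matrix.mul_assoc, nonsing_inv_mul_cancel_left _ _ hS]
  have hbij : Function.Bijective S.mulVecLin :=
    ⟨mulVec_injective_of_isUnit ((isUnit_iff_isUnit_det S).mpr hS),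
      mulVec_surjective_iff_isUnit.mpr ((isUnit_iff_isUnit_det S).mpr hS)⟩
  have hspan : Submodule.span ℂ (Set.range fun ℓ : Fin L => (A ^ (ℓ : ℕ)).mulVec φ) =
      (Submodule.span ℂ (Set.range fun ℓ : Fin L =>
        (jordanMatrix m lam ^ (ℓ : ℕ)) *ᵥ (S⁻¹ *ᵥ φ))).map S.mulVecLin := by
    rw [Submodule.map_span, ← Set.range_comp]
    congr 2
    funext ℓ
    simp [hpow, mulVec_mulVec, Matrix.mul_assoc]
  have htop : (⊤ : Submodule ℂ ((Σ j : Fin M, Fin (m j)) → ℂ)) =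
      Submodule.map S.mulVecLin ⊤ := by
    rw [Submodule.map_top, LinearMap.range_eq_top.mpr hbij.2]
  have hlast : ∀ j, ((⟨m j - 1, Nat.sub_lt (hm j) Nat.one_pos⟩ : Fin (m j)) : ℕ) + 1 = m j :=
    fun j => Nat.sub_add_cancel (hm j)
  rw [hspan, htop, (Submodule.map_injective_of_injective hbij.1).eq_iff]
  constructor
  · exact of_span_jordan_eq_top m lam L _ _ hlast
  · rintro ⟨hlam, hv⟩
    exact span_jordan_eq_top m lam L (hd ▸ hL) _ hlam _ hlast hv
end

section
/- Let L ≥ d and let A ∈ ℂ^{d×d} be diagonalizable, say A = S · diag(λ₀, …, λ_{d−1}) · S⁻¹ with S ∈ ℂ^{d×d} invertible, and let φ ∈ ℂ^d with ψ := S⁻¹ φ. Then the family {A^ℓ φ : ℓ = 0, …, L−1} spans ℂ^d if and only if the eigenvalues λ₀, …, λ_{d−1} are pairwise distinct and every coordinate of ψ is nonzero. -/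
/-!
A family spans `ℂ^d` iff only the zero vector `c` satisfies `c ⬝ᵥ v ℓ = 0` for all `ℓ`
(`span_range_eq_top_iff`). Since `A ^ ℓ φ = S (λ i ^ ℓ ψ i)_i` with `ψ = S⁻¹ φ`, substituting
`b = c S` turns this into: the equations `∑ i, b i ψ i λ i ^ ℓ = 0`, `ℓ < L`, force `b = 0`.
If the `λ i` are distinct, the first `d ≤ L` equations form an invertible Vandermonde system, so
`b i ψ i = 0` for all `i`, and nonvanishing of `ψ` gives `b = 0`. Conversely, a zero coordinate
`ψ i = 0`, or a coincidence `λ i = λ j` with `ψ` nowhere zero, yields a nonzero solution: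
`b = e i`, respectively `b = ψ j e i - ψ i e j`.
-/

open Matrix in
/-- A proper subspace lies in the kernel of a nonzero functional, and every functional on `ℂ^d` is
`c ⬝ᵥ ·` for a unique `c`. The pairing is bilinear, without complex conjugation. -/
theorem span_range_eq_top_iff {d : ℕ} {ι : Type*} (v : ι → Fin d → ℂ) :
    Submodule.span ℂ (Set.range v) = ⊤ ↔
      ∀ c : Fin d → ℂ, (∀ k, c ⬝ᵥ v k = 0) → c = 0 := by
  constructor
  · intro h c hc
    have h0 : dotProductEquiv ℂ (Fin d) c = 0 := by
      apply LinearMap.ext_on_range h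
      intro k
      simpa using hc k
    simpa using h0
  · intro h
    by_contra hne
    obtain ⟨f, hf, hle⟩ := Submodule.exists_le_ker_of_lt_top _ (lt_top_iff_ne_top.mpr hne)
    obtain ⟨c, rfl⟩ := (dotProductEquiv ℂ (Fin d)).surjective f
    refine hf ?_
    rw [h c fun k => ?_, map_zero]
    simpa using hle (Submodule.subset_span ⟨k, rfl⟩)

open Matrix in
theorem conj_diagonal_pow_mulVec {d : ℕ} (S : Matrix (Fin d) (Fin d) ℂ) (hS : IsUnit S.det)
    (lam φ : Fin d → ℂ) (l : ℕ) :
    ((S * diagonal lam * S⁻¹) ^ l) *ᵥ φ = S *ᵥ fun i => lam i ^ l * (S⁻¹ *ᵥ φ) i := by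
  have hpow : (S * diagonal lam * S⁻¹) ^ l = S * diagonal (lam ^ l) * S⁻¹ := by
    induction l with
    | zero => simp [mul_nonsing_inv S hS]
    | succ n ih =>
      rw [pow_succ, ih, ← diagonal_pow, ← diagonal_pow, pow_succ (diagonal lam)]
      simp only [Matrix.mul_assoc, nonsing_inv_mul_cancel_left S _ hS]
  rw [hpow, Matrix.mul_assoc, ← mulVec_mulVec, ← mulVec_mulVec]
  congr 1
  ext i
  simp [mulVec_diagonal]

open Matrix in
/-- **Dynamical frame, diagonalizable case.** Let `L ≥ d`, `A = S diag(λ) S⁻¹` with `S`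
invertible, and `ψ = S⁻¹ φ`. Then `{A^ℓ φ}_{ℓ=0}^{L-1}` spans `ℂ^d` iff the eigenvalues are
pairwise distinct and every coordinate of `ψ` is nonzero. -/
theorem dynamical_frame_diagonalizable (d L : ℕ) (hL : d ≤ L)
    (A S : Matrix (Fin d) (Fin d) ℂ) (hS : IsUnit S.det) (lam : Fin d → ℂ)
    (hA : A = S * Matrix.diagonal lam * S⁻¹) (φ : Fin d → ℂ) :
    Submodule.span ℂ (Set.range fun ℓ : Fin L => (A ^ (ℓ : ℕ)).mulVec φ) = ⊤ ↔
      (Function.Injective lam ∧ ∀ i : Fin d, S⁻¹.mulVec φ i ≠ 0) := by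
  subst hA
  simp only [span_range_eq_top_iff, conj_diagonal_pow_mulVec S hS, dotProduct_mulVec]
  generalize S⁻¹ *ᵥ φ = ψ
  constructor
  · intro h
    have hb : ∀ b : Fin d → ℂ,
        (∀ l : Fin L, b ⬝ᵥ (fun i => lam i ^ (l : ℕ) * ψ i) = 0) → b = 0 := by
      intro b hb
      have hbS : (b ᵥ* S⁻¹) ᵥ* S = b := by
        rw [vecMul_vecMul, nonsing_inv_mul S hS, vecMul_one]
      rw [← hbS, h (b ᵥ* S⁻¹) (by simpa only [hbS] using hb), zero_vecMul]
    have hψ : ∀ i, ψ i ≠ 0 := by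
      intro i hi
      have h1 := hb (Pi.single i 1) (by simp [hi])
      simpa using congrFun h1 i
    refine ⟨fun i j hij => ?_, hψ⟩
    by_contra hne
    have h1 := hb (Pi.single i (ψ j) - Pi.single j (ψ i)) (fun l => by
      simp only [sub_dotProduct, single_dotProduct, hij]
      ring)
    exact hψ j (by simpa [hne] using congrFun h1 i)
  · rintro ⟨hinj, hψ⟩ c hc
    have hz : (fun i => (c ᵥ* S) i * ψ i) = 0 := by
      apply eq_zero_of_forall_pow_sum_mul_pow_eq_zero hinj
      intro l
      rw [← hc (Fin.castLE hL l)]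
      exact Finset.sum_congr rfl fun i _ => by simp only [Fin.val_castLE]; ring
    have hcS : c ᵥ* S = 0 := by
      ext i
      exact (mul_eq_zero.mp (congrFun hz i)).resolve_right (hψ i)
    have hcancel : (c ᵥ* S) ᵥ* S⁻¹ = c := by
      rw [vecMul_vecMul, mul_nonsing_inv S hS, vecMul_one]
    rw [← hcancel, hcS, zero_vecMul]
end

section
/- Let L ≥ d and let a, φ ∈ ℂ^d be arbitrary. For ℓ ≥ 0 write a^{*ℓ} * φ for the ℓ-fold cyclic convolution of a applied to φ (with a^{*0} * φ = φ). Then the family {a^{*ℓ} * φ : ℓ = 0, …, L−1} spans ℂ^d if and only if all coordinates of the discrete Fourier transform φ̂ are nonzero and the coordinates of the discrete Fourier transform â are pairwise distinct. -/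
/-!
The discrete Fourier transform is the matrix action of the Vandermonde matrix with nodes `ζ ^ k`,
`ζ = e^{-2πi/d}`; these nodes are distinct, so it is a linear automorphism of `ℂ^d`, and it turns
cyclic convolution into the pointwise product. Hence the family spans iff the vectors
`(â_k ^ ℓ * φ̂_k)_k`, `ℓ < L`, do. A zero of `φ̂`, or a coincidence `â_k = â_l`, yields a nonzero
functional killing all of them. Conversely, a functional with coefficients `c` killing the first
`d` of them satisfies `∑ c_k φ̂_k â_k ^ ℓ = 0` for all `ℓ < d`, and invertibility of the Vandermonde
matrix with nodes `â_k` forces `c_k φ̂_k = 0`, hence `c = 0`.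
-/

/-- Cyclic convolution on `ℂ^d`: `(a * v)_n = ∑_j a_j v_{(n-j) mod d}`. -/
noncomputable def cyclicConv {d : ℕ} (a v : Fin d → ℂ) : Fin d → ℂ :=
  fun n => ∑ j : Fin d, a j * v (n - j)

/-- `ℓ`-fold cyclic convolution of `a` applied to `v` (with `a^{*0} * v = v`). -/
noncomputable def iterCyclicConv {d : ℕ} (a : Fin d → ℂ) : ℕ → (Fin d → ℂ) → (Fin d → ℂ)
  | 0, v => v
  | ℓ + 1, v => cyclicConv a (iterCyclicConv a ℓ v)

/-- Discrete Fourier transform: `v̂_k = ∑_j v_j e^{-2πi jk/d}`. -/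
noncomputable def dft {d : ℕ} (v : Fin d → ℂ) : Fin d → ℂ :=
  fun k => ∑ j : Fin d, v j * Complex.exp (-2 * Real.pi * Complex.I * (j : ℕ) * (k : ℕ) / d)

/-- The root of unity `e^{-2πi/d}` whose powers are the nodes of the transform. -/
noncomputable def dftRoot (d : ℕ) : ℂ := Complex.exp (-(2 * Real.pi * Complex.I / d))

lemma dftRoot_isPrimitiveRoot {d : ℕ} (hd : d ≠ 0) : IsPrimitiveRoot (dftRoot d) d := by
  have h := (Complex.isPrimitiveRoot_exp d hd).inv
  rwa [← Complex.exp_neg] at h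

lemma dft_eq_sum_pow {d : ℕ} (v : Fin d → ℂ) (k : Fin d) :
    dft v k = ∑ j : Fin d, v j * (dftRoot d ^ (k : ℕ)) ^ (j : ℕ) := by
  unfold dft dftRoot
  refine Finset.sum_congr rfl fun j _ => ?_
  rw [← pow_mul, ← Complex.exp_nat_mul]
  congr 2
  push_cast
  ring

/-- The transform as a linear map, given by a Vandermonde matrix. -/
noncomputable def dftLin (d : ℕ) : (Fin d → ℂ) →ₗ[ℂ] (Fin d → ℂ) :=
  (Matrix.vandermonde fun k : Fin d => dftRoot d ^ (k : ℕ)).mulVecLin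

lemma dftLin_apply {d : ℕ} (v : Fin d → ℂ) : dftLin d v = dft v := by
  ext k
  simp [dftLin, dft_eq_sum_pow, Matrix.mulVec, dotProduct, Matrix.vandermonde_apply, mul_comm]

lemma dftLin_bijective {d : ℕ} (hd : d ≠ 0) : Function.Bijective (dftLin d) := by
  have hdet : (Matrix.vandermonde fun k : Fin d => dftRoot d ^ (k : ℕ)).det ≠ 0 := by
    rw [Matrix.det_vandermonde_ne_zero_iff]
    intro i j hij
    exact Fin.ext ((dftRoot_isPrimitiveRoot hd).pow_inj i.isLt j.isLt hij)
  have hinj : Function.Injective (dftLin d) :=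
    Matrix.mulVec_injective_of_isUnit
      ((Matrix.isUnit_iff_isUnit_det _).2 (isUnit_iff_ne_zero.2 hdet))
  exact ⟨hinj, LinearMap.injective_iff_surjective.1 hinj⟩

/-- The convolution theorem. -/
lemma dft_cyclicConv {d : ℕ} (hd : d ≠ 0) (a v : Fin d → ℂ) (k : Fin d) :
    dft (cyclicConv a v) k = dft a k * dft v k := by
  have : NeZero d := ⟨hd⟩
  have hroot : (dftRoot d ^ (k : ℕ)) ^ d = 1 := by
    rw [← pow_mul, mul_comm, pow_mul, (dftRoot_isPrimitiveRoot hd).pow_eq_one, one_pow]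
  simp only [dft_eq_sum_pow, cyclicConv]
  generalize dftRoot d ^ (k : ℕ) = z at hroot ⊢
  simp only [Finset.sum_mul]
  rw [Finset.sum_comm]
  refine Finset.sum_congr rfl fun j _ => ?_
  rw [Finset.mul_sum]
  refine (Equiv.sum_comp (Equiv.addRight j) _).symm.trans ?_
  refine Finset.sum_congr rfl fun m _ => ?_
  have hz : z ^ ((m + j : Fin d) : ℕ) = z ^ (m : ℕ) * z ^ (j : ℕ) := by
    rw [Fin.val_add, ← pow_eq_pow_mod _ hroot, pow_add]
  simp only [Equiv.coe_addRight, add_sub_cancel_right, hz]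
  ring

lemma dft_iterCyclicConv {d : ℕ} (hd : d ≠ 0) (a v : Fin d → ℂ) (ℓ : ℕ) (k : Fin d) :
    dft (iterCyclicConv a ℓ v) k = dft v k * dft a k ^ ℓ := by
  induction ℓ with
  | zero => simp [iterCyclicConv]
  | succ n ih =>
    rw [iterCyclicConv, dft_cyclicConv hd, ih]
    ring

/-- **Repeated convolution.** Let `L ≥ d ≥ 1` and `a, φ ∈ ℂ^d`. The family
`{a^{*ℓ} * φ}_{ℓ=0}^{L-1}` spans `ℂ^d` iff all coordinates of `φ̂` are nonzero and the
coordinates of `â` are pairwise distinct. -/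
theorem repeated_convolution_frame (d L : ℕ) (hd : 0 < d) (hL : d ≤ L) (a φ : Fin d → ℂ) :
    Submodule.span ℂ (Set.range fun ℓ : Fin L => iterCyclicConv a (ℓ : ℕ) φ) = ⊤ ↔
      ((∀ k : Fin d, dft φ k ≠ 0) ∧ Function.Injective (dft a)) := by
  have hd0 : d ≠ 0 := hd.ne'
  have hbij := dftLin_bijective hd0
  constructor
  · intro hspan
    -- a functional of the transform vanishing on the family vanishes identically
    have key : ∀ f : (Fin d → ℂ) →ₗ[ℂ] ℂ,
        (∀ ℓ : Fin L, f (dft (iterCyclicConv a (ℓ : ℕ) φ)) = 0) → ∀ w, f w = 0 := by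
      intro f hf w
      obtain ⟨v, rfl⟩ := hbij.2 w
      have h0 : f ∘ₗ dftLin d = 0 := by
        refine LinearMap.ext_on_range hspan fun ℓ => ?_
        simpa [dftLin_apply] using hf ℓ
      exact LinearMap.congr_fun h0 v
    have hφ : ∀ k : Fin d, dft φ k ≠ 0 := by
      intro k hk
      have h := key (LinearMap.proj k) (fun ℓ => by
        simp [dft_iterCyclicConv hd0, hk]) (Pi.single k 1)
      simp at h
    refine ⟨hφ, fun k l hkl => ?_⟩
    by_contra hne
    have h := key (dft φ l • LinearMap.proj k - dft φ k • LinearMap.proj l) (fun ℓ => by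
      simp only [LinearMap.sub_apply, LinearMap.smul_apply, LinearMap.proj_apply, smul_eq_mul,
        dft_iterCyclicConv hd0, hkl]
      ring) (Pi.single k 1)
    simp [Pi.single_eq_of_ne (Ne.symm hne)] at h
    exact hφ l h
  · rintro ⟨hφ, ha⟩
    by_contra hspan
    obtain ⟨f, hf, hle⟩ := Submodule.exists_le_ker_of_lt_top _ (lt_top_iff_ne_top.2 hspan)
    let e := LinearEquiv.ofBijective (dftLin d) hbij
    -- the functional `f`, read on the Fourier side
    let g : (Fin d → ℂ) →ₗ[ℂ] ℂ := f ∘ₗ e.symm.toLinearMap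
    have hg : ∀ v, g (dft v) = f v := fun v => by
      rw [← dftLin_apply]
      exact congrArg f (e.symm_apply_apply v)
    have hsum : ∀ w, g w = ∑ k, w k * g (Pi.single k 1) := fun w => by
      conv_lhs => rw [LinearMap.pi_apply_eq_sum_univ g w]
      refine Finset.sum_congr rfl fun k _ => ?_
      rw [smul_eq_mul]
      congr 2
      ext j
      simp [Pi.single_apply, eq_comm]
    have hc : (fun k => g (Pi.single k 1) * dft φ k) = 0 := by
      refine Matrix.eq_zero_of_forall_pow_sum_mul_pow_eq_zero ha fun i => ?_
      have h0 : f (iterCyclicConv a (i : ℕ) φ) = 0 :=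
        hle (Submodule.subset_span ⟨Fin.castLE hL i, rfl⟩)
      rw [← hg, hsum] at h0
      rw [← h0]
      refine Finset.sum_congr rfl fun k _ => ?_
      rw [dft_iterCyclicConv hd0]
      ring
    apply hf
    refine LinearMap.ext fun v => ?_
    rw [← hg, hsum, LinearMap.zero_apply]
    refine Finset.sum_eq_zero fun k _ => ?_
    have hk := (mul_eq_zero.1 (congrFun hc k)).resolve_right (hφ k)
    rw [hk, mul_zero]
end

section
/- Let A ∈ ℂ^{d×d} be diagonalizable, say A = S · diag(λ₀, …, λ_{d−1}) · S⁻¹ with S ∈ ℂ^{d×d} invertible, let φ ∈ ℂ^d with ψ := S⁻¹ φ, and let L ≥ d. Then the family {A^ℓ φ : ℓ = 0, …, L−1} is a full-spark frame for ℂ^d if and only if every coordinate of ψ is nonzero and the d×L Vandermonde matrix V_λ := (λ_k^ℓ)_{k=0,…,d−1; ℓ=0,…,L−1} has full spark, i.e., every d×d submatrix formed by choosing d of its L columns is invertible. -/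
/-!
Since `A ^ ℓ = S * diag(lam ^ ℓ) * S⁻¹`, the vector `A ^ ℓ φ` is `S` applied to
`(lam k ^ ℓ * ψ k)_k`, where `ψ = S⁻¹ φ`. Choosing columns by `g : Fin d → Fin L`, the square
matrix with columns `A ^ (g i) φ` therefore factors as `S * diag(ψ) * V_g`, with `V_g` the chosen
submatrix of the Vandermonde matrix (`columns_eq`). Its columns span exactly when its determinant
`det S * (∏ ψ k) * det V_g` is a unit (`span_cols_eq_top_iff`), and `det S` is one. The bound
`d ≤ L` supplies at least one choice of columns, which forces the coordinates of `ψ` to be nonzero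
and, conversely, makes the whole family spanning.
-/

/-- A family of `L` vectors in `ℂ^d` has full spark if every subset of `d` of them
spans `ℂ^d`. -/
def IsFullSpark {d L : ℕ} (f : Fin L → (Fin d → ℂ)) : Prop :=
  ∀ g : Fin d → Fin L, Function.Injective g →
    Submodule.span ℂ (Set.range fun i => f (g i)) = ⊤

/-- A full-spark frame for `ℂ^d` is a spanning family with full spark. -/
def IsFullSparkFrame {d L : ℕ} (f : Fin L → (Fin d → ℂ)) : Prop :=
  Submodule.span ℂ (Set.range f) = ⊤ ∧ IsFullSpark f

/-- A square matrix is invertible iff its columns, given as a family of vectors, span. -/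
lemma span_cols_eq_top_iff {d : ℕ} (M : Matrix (Fin d) (Fin d) ℂ) (v : Fin d → Fin d → ℂ)
    (h : ∀ i k, v i k = M k i) :
    Submodule.span ℂ (Set.range v) = ⊤ ↔ IsUnit M.det := by
  have hv : v = M.col := by
    funext i k
    exact h i k
  rw [hv, ← Matrix.range_mulVecLin, LinearMap.range_eq_top, ← Matrix.isUnit_iff_isUnit_det,
    ← Matrix.mulVec_surjective_iff_isUnit]
  rfl

lemma conj_diagonal_pow {d : ℕ} (S : Matrix (Fin d) (Fin d) ℂ) (hS : IsUnit S.det)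
    (lam : Fin d → ℂ) (n : ℕ) :
    (S * Matrix.diagonal lam * S⁻¹) ^ n = S * Matrix.diagonal (lam ^ n) * S⁻¹ := by
  induction n with
  | zero => simp [Matrix.mul_nonsing_inv S hS]
  | succ n ih =>
    rw [pow_succ, ih, ← Matrix.diagonal_pow, ← Matrix.diagonal_pow, pow_succ (Matrix.diagonal lam)]
    simp only [Matrix.mul_assoc, Matrix.nonsing_inv_mul_cancel_left _ _ hS]

/-- The factorization `S * diag(ψ) * V_g` of the matrix with columns `A ^ (e i) φ`. -/
lemma columns_eq {d : ℕ} (S : Matrix (Fin d) (Fin d) ℂ) (hS : IsUnit S.det)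
    (lam φ : Fin d → ℂ) (e : Fin d → ℕ) (i k : Fin d) :
    ((S * Matrix.diagonal lam * S⁻¹) ^ e i).mulVec φ k =
      (S * Matrix.diagonal (S⁻¹.mulVec φ) * Matrix.of fun k i : Fin d => lam k ^ e i) k i := by
  rw [conj_diagonal_pow S hS, ← Matrix.mulVec_mulVec, ← Matrix.mulVec_mulVec, Matrix.mul_assoc,
    Matrix.mul_apply]
  simp only [Matrix.mulVec, dotProduct, Matrix.diagonal_mul, Matrix.of_apply]
  refine Finset.sum_congr rfl fun j _ => ?_
  congr 1
  simp [Matrix.diagonal_apply, mul_comm]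

open Matrix in
/-- **Full-spark dynamical frames.** Let `A = S diag(λ) S⁻¹` with `S` invertible,
`ψ = S⁻¹ φ`, and `L ≥ d`. Then `{A^ℓ φ}_{ℓ=0}^{L-1}` is a full-spark frame for `ℂ^d` iff
every coordinate of `ψ` is nonzero and the `d × L` Vandermonde matrix `(λ_k^ℓ)` has full
spark, i.e. every `d × d` submatrix formed by choosing `d` of its `L` columns is invertible. -/
theorem dynamical_full_spark_frame (d L : ℕ) (hL : d ≤ L)
    (A S : Matrix (Fin d) (Fin d) ℂ) (hS : IsUnit S.det) (lam : Fin d → ℂ)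
    (hA : A = S * Matrix.diagonal lam * S⁻¹) (φ : Fin d → ℂ) :
    IsFullSparkFrame (fun ℓ : Fin L => (A ^ (ℓ : ℕ)).mulVec φ) ↔
      ((∀ i : Fin d, S⁻¹.mulVec φ i ≠ 0) ∧
        ∀ g : Fin d → Fin L, Function.Injective g →
          IsUnit (Matrix.det (Matrix.of fun k i : Fin d => lam k ^ ((g i : ℕ))))) := by
  subst hA
  have key (g : Fin d → Fin L) :
      Submodule.span ℂ (Set.range fun i =>
        ((S * Matrix.diagonal lam * S⁻¹) ^ (g i : ℕ)).mulVec φ) = ⊤ ↔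
      (∀ i : Fin d, S⁻¹.mulVec φ i ≠ 0) ∧
        IsUnit (Matrix.det (Matrix.of fun k i : Fin d => lam k ^ ((g i : ℕ)))) := by
    rw [span_cols_eq_top_iff _ _ fun i k => columns_eq S hS lam φ (fun i => (g i : ℕ)) i k,
      Matrix.det_mul, Matrix.det_mul, Matrix.det_diagonal, IsUnit.mul_iff, IsUnit.mul_iff]
    simp only [hS, true_and, isUnit_iff_ne_zero, Finset.prod_ne_zero_iff, Finset.mem_univ,
      true_imp_iff]
  have hinj := Fin.castLE_injective hL
  constructor
  · rintro ⟨-, h⟩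
    exact ⟨((key _).1 (h _ hinj)).1, fun g hg => ((key g).1 (h g hg)).2⟩
  · rintro ⟨hψ, hV⟩
    refine ⟨?_, fun g hg => (key g).2 ⟨hψ, hV g hg⟩⟩
    rw [eq_top_iff, ← (key (Fin.castLE hL)).2 ⟨hψ, hV _ hinj⟩]
    refine Submodule.span_mono ?_
    rintro _ ⟨i, rfl⟩
    exact ⟨Fin.castLE hL i, rfl⟩
end

section
/- Let 0 < λ₀ < λ₁ < … < λ_{d−1} be real numbers and let 0 ≤ m₀ < m₁ < … < m_{d−1} be integers. Then the generalized Vandermonde matrix (λ_k^{m_ℓ})_{k,ℓ=0}^{d−1} has strictly positive determinant; in particular it is invertible. -/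
/-!
The proof is by induction on the size. Expanding along the last row, and letting the last node be
a variable `x`, the determinant becomes a polynomial `p(x) = ∑ c_ℓ x ^ m_ℓ` with at most `n + 1`
monomials, whose leading coefficient `c_n` is a smaller generalized Vandermonde determinant, hence
positive. The other `n` nodes are roots of `p` because they produce two equal rows. By Descartes'
rule of signs a nonzero real polynomial has fewer distinct positive roots than monomials
(`card_pos_roots_lt_card_support`), so `p` has no root beyond the first `n` nodes; being
eventually positive, it is positive at the last node by the intermediate value theorem.
-/

open Polynomial in
theorem signVariations_lt_card_support (p : ℝ[X]) (hp : p ≠ 0) :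
    p.signVariations < p.support.card := by
  induction h : p.support.card using Nat.strong_induction_on generalizing p with
  | _ k ih =>
    subst h
    have hlt := eraseLead_support_card_lt hp
    by_cases h0 : p.eraseLead = 0
    · have hs : p.signVariations = 0 := by
        rw [← eraseLead_add_monomial_natDegree_leadingCoeff p, h0, zero_add,
          signVariations_monomial]
      omega
    · have := ih _ hlt p.eraseLead h0 rfl
      have := signVariations_le_eraseLead_succ (P := p)
      omega

open Polynomial in
/-- A weak form of Descartes' rule of signs: only the number of monomials matters. -/
theorem card_pos_roots_lt_card_support (p : ℝ[X]) (hp : p ≠ 0) (S : Finset ℝ)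
    (hS : ∀ x ∈ S, 0 < x ∧ p.eval x = 0) : S.card < p.support.card := by
  refine lt_of_le_of_lt ?_ (signVariations_lt_card_support p hp)
  refine le_trans ?_ (roots_countP_pos_le_signVariations (P := p))
  rw [Multiset.countP_eq_card_filter]
  refine Multiset.card_le_card ((Multiset.le_iff_subset S.nodup).2 fun x hx => ?_)
  rw [Multiset.mem_filter, mem_roots hp]
  exact ⟨(hS x hx).2, (hS x hx).1⟩

open Polynomial in
theorem exists_gt_eval_pos (p : ℝ[X]) (hp : 0 < p.leadingCoeff) (a : ℝ) :
    ∃ y, a < y ∧ 0 < p.eval y := by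
  by_cases hd : 0 < p.degree
  · have h := tendsto_atTop_of_leadingCoeff_nonneg p hd hp.le
    exact ((Filter.eventually_gt_atTop a).and (h.eventually_gt_atTop 0)).exists
  · have h := eq_C_of_degree_le_zero (not_lt.1 hd)
    refine ⟨a + 1, by linarith, ?_⟩
    rw [h, leadingCoeff_C] at hp
    rw [h, eval_C]
    exact hp

open Polynomial in
theorem det_generalized_vandermonde_pos_aux (d : ℕ) (lam : Fin d → ℝ) (m : Fin d → ℕ)
    (hpos : ∀ k, 0 < lam k) (hlam : StrictMono lam) (hm : StrictMono m) :
    0 < Matrix.det (Matrix.of fun k ℓ : Fin d => lam k ^ m ℓ) := by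
  induction d with
  | zero => simp
  | succ n ih =>
    -- the cofactors along the last row, which do not involve the last node
    let c : Fin (n + 1) → ℝ := fun j => (-1) ^ (n + (j : ℕ)) *
      Matrix.det (Matrix.of fun k ℓ : Fin n => lam k.castSucc ^ m (j.succAbove ℓ))
    let p : ℝ[X] := ∑ j, monomial (m j) (c j)
    have heval : ∀ x, p.eval x = Matrix.det
        (Matrix.of fun k ℓ : Fin (n + 1) => (Function.update lam (Fin.last n) x k) ^ m ℓ) := by
      intro x
      rw [Matrix.det_succ_row _ (Fin.last n)]
      simp only [p, c, eval_finsetSum, eval_monomial]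
      refine Finset.sum_congr rfl fun j _ => ?_
      have : (Matrix.of fun k ℓ : Fin (n + 1) =>
          (Function.update lam (Fin.last n) x k) ^ m ℓ).submatrix
          (Fin.last n).succAbove j.succAbove =
          Matrix.of fun k ℓ : Fin n => lam k.castSucc ^ m (j.succAbove ℓ) := by
        ext k ℓ
        simp [Fin.succAbove_last]
      rw [this]
      simp only [Matrix.of_apply, Function.update_self, Fin.val_last]
      ring
    have hcoeff : p.coeff (m (Fin.last n)) = c (Fin.last n) := by
      simp [p, coeff_monomial, hm.injective.eq_iff]
    have hc : 0 < c (Fin.last n) := by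
      have := ih (lam ∘ Fin.castSucc) (m ∘ Fin.castSucc) (fun k => hpos _)
        (hlam.comp Fin.strictMono_castSucc) (hm.comp Fin.strictMono_castSucc)
      simpa [c, Fin.succAbove_last, ← two_mul] using this
    have hsupp : p.support ⊆ Finset.univ.image m := by
      intro i hi
      by_contra hne
      refine mem_support_iff.1 hi ?_
      simp only [p, finsetSum_coeff, coeff_monomial]
      refine Finset.sum_eq_zero fun j _ => if_neg fun h => hne ?_
      exact Finset.mem_image.2 ⟨j, Finset.mem_univ _, h⟩
    have hcard : p.support.card ≤ n + 1 :=
      (Finset.card_le_card hsupp).trans (Finset.card_image_le.trans (by simp))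
    have hp : p ≠ 0 := by
      intro h
      rw [h, coeff_zero] at hcoeff
      exact hc.ne hcoeff
    have hdeg : p.natDegree = m (Fin.last n) := by
      refine le_antisymm ?_ (le_natDegree_of_ne_zero (hcoeff ▸ hc.ne'))
      obtain ⟨j, -, hj⟩ := Finset.mem_image.1 (hsupp (natDegree_mem_support_of_nonzero hp))
      exact hj ▸ hm.monotone (Fin.le_last j)
    have hlead : 0 < p.leadingCoeff := by
      rw [leadingCoeff, hdeg, hcoeff]
      exact hc
    have hroot : ∀ i : Fin n, p.eval (lam i.castSucc) = 0 := by
      intro i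
      rw [heval]
      refine Matrix.det_zero_of_row_eq (Fin.castSucc_lt_last i).ne ?_
      ext ℓ
      simp
    have hgoal := heval (lam (Fin.last n))
    rw [Function.update_eq_self] at hgoal
    rw [← hgoal]
    by_contra! hneg
    obtain ⟨y, hy, hpy⟩ := exists_gt_eval_pos p hlead (lam (Fin.last n))
    obtain ⟨z, hz, hpz⟩ := intermediate_value_Icc hy.le p.continuous.continuousOn ⟨hneg, hpy.le⟩
    -- `z` together with the first `n` nodes gives too many positive roots
    have hzn : z ∉ Finset.univ.image (fun i : Fin n => lam i.castSucc) := by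
      intro h
      obtain ⟨i, -, hi⟩ := Finset.mem_image.1 h
      have h1 := hlam (Fin.castSucc_lt_last i)
      have h2 := hz.1
      linarith
    have hlt := card_pos_roots_lt_card_support p hp
      (insert z (Finset.univ.image (fun i : Fin n => lam i.castSucc))) (by
        intro x hx
        rcases Finset.mem_insert.1 hx with rfl | hx
        · exact ⟨(hpos _).trans_le hz.1, hpz⟩
        · obtain ⟨i, -, rfl⟩ := Finset.mem_image.1 hx
          exact ⟨hpos _, hroot i⟩)
    rw [Finset.card_insert_of_notMem hzn, Finset.card_image_of_injective (f := fun i : Fin n => lam i.castSucc) _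
      (hlam.injective.comp (Fin.castSucc_injective n)), Finset.card_univ, Fintype.card_fin] at hlt
    omega


open Matrix in
/-- **Generalized Vandermonde determinant of the first kind.** For positive reals
`0 < λ₀ < λ₁ < … < λ_{d-1}` and integers `0 ≤ m₀ < m₁ < … < m_{d-1}`, the generalized
Vandermonde matrix `(λ_k^{m_ℓ})` has strictly positive determinant; in particular it is
invertible. -/
theorem generalized_vandermonde_det_pos (d : ℕ) (lam : Fin d → ℝ) (m : Fin d → ℕ)
    (hpos : ∀ k, 0 < lam k) (hlam : StrictMono lam) (hm : StrictMono m) :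
    0 < Matrix.det (Matrix.of fun k ℓ : Fin d => lam k ^ m ℓ) ∧
      IsUnit (Matrix.det (Matrix.of fun k ℓ : Fin d => lam k ^ m ℓ)) := by
  have h := det_generalized_vandermonde_pos_aux d lam m hpos hlam hm
  exact ⟨h, h.ne'.isUnit⟩
end

section
/- Let M ≥ 1, let λ₀, …, λ_{M−1} ∈ ℂ, let m₀, …, m_{M−1} ≥ 1 be integers with Σ_j m_j = d, and let Ṽ ∈ ℂ^{d×d} be the confluent (second-kind generalized) Vandermonde matrix built by stacking the blocks R_j := (binom(ℓ, k) · λ_j^{ℓ−k})_{k=0,…,m_j−1; ℓ=0,…,d−1} for j = 0, …, M−1. Then det(Ṽ) = Π_{0 ≤ k < j ≤ M−1} (λ_j − λ_k)^{m_k m_j}; in particular Ṽ is invertible if and only if λ₀, …, λ_{M−1} are pairwise distinct. -/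
/-!
Row `(j, k)` of the confluent Vandermonde matrix is the linear functional sending a polynomial
to the `k`-th coefficient of its Taylor expansion at `λ_j`, evaluated on the monomials `X ^ ℓ`,
`ℓ < d`. Replace the monomials by the Newton polynomials
`N_(j,k) = (X - λ_j) ^ k * ∏_{i < j} (X - λ_i) ^ m_i`. Since `N_q` is monic of degree `stackIdx m q`,
the change of basis is unitriangular for the stacking order. In the Newton basis the matrix is
triangular: `N_(j,k)` vanishes to order `m_i` at `λ_i` for `i < j` and to order at least `k` at
`λ_j`, where its `k`-th Taylor coefficient is `∏_{i < j} (λ_j - λ_i) ^ m_i`. The product of these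
diagonal entries is the determinant.
-/

/-- The position of the row/column indexed by `p = (j, k)` in the matrix obtained by stacking
blocks of sizes `m 0, …, m (M-1)`: namely `m 0 + ⋯ + m (j-1) + k`. -/
def stackIdx {M : ℕ} (m : Fin M → ℕ) (p : Σ j : Fin M, Fin (m j)) : ℕ :=
  (∑ i : Fin M, if i < p.1 then m i else 0) + (p.2 : ℕ)

open Polynomial in
/-- The Newton polynomial `(X - λ_j) ^ k * ∏_{i < j} (X - λ_i) ^ m_i` attached to the stacked index
`(j, k)`. -/
noncomputable def newtonPoly {M : ℕ} (lam : Fin M → ℂ) (m : Fin M → ℕ)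
    (q : Σ j : Fin M, Fin (m j)) : ℂ[X] :=
  (∏ i ∈ Finset.Iio q.1, (X - C (lam i)) ^ m i) * (X - C (lam q.1)) ^ (q.2 : ℕ)

lemma stackIdx_eq {M : ℕ} (m : Fin M → ℕ) (p : Σ j : Fin M, Fin (m j)) :
    stackIdx m p = (∑ i ∈ Finset.Iio p.1, m i) + (p.2 : ℕ) := by
  unfold stackIdx
  rw [← Finset.sum_filter]
  congr 2
  ext i
  simp

lemma stackIdx_lt_sum {M : ℕ} (m : Fin M → ℕ) (p : Σ j : Fin M, Fin (m j)) (s : Finset (Fin M))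
    (hs : Finset.Iic p.1 ⊆ s) : stackIdx m p < ∑ i ∈ s, m i := by
  have h1 : ∑ i ∈ Finset.Iic p.1, m i ≤ ∑ i ∈ s, m i := Finset.sum_le_sum_of_subset hs
  rw [← Finset.Iio_insert, Finset.sum_insert (by simp)] at h1
  rw [stackIdx_eq]
  have := p.2.isLt
  omega

lemma stackIdx_lt_of_fst_lt {M : ℕ} (m : Fin M → ℕ) (p q : Σ j : Fin M, Fin (m j))
    (h : p.1 < q.1) : stackIdx m p < stackIdx m q := by
  have := stackIdx_lt_sum m p (Finset.Iio q.1)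
    (fun i hi => Finset.mem_Iio.2 (lt_of_le_of_lt (Finset.mem_Iic.1 hi) h))
  rw [stackIdx_eq m q]
  omega

/-- The order induced by `stackIdx` is the lexicographic order on pairs `(j, k)`. -/
lemma fst_lt_or_of_stackIdx_lt {M : ℕ} (m : Fin M → ℕ) (p q : Σ j : Fin M, Fin (m j))
    (h : stackIdx m p < stackIdx m q) : p.1 < q.1 ∨ (p.1 = q.1 ∧ (p.2 : ℕ) < q.2) := by
  rcases lt_trichotomy p.1 q.1 with h1 | h1 | h1
  · exact Or.inl h1
  · refine Or.inr ⟨h1, ?_⟩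
    have h2 : ∑ i ∈ Finset.Iio p.1, m i = ∑ i ∈ Finset.Iio q.1, m i := by rw [h1]
    rw [stackIdx_eq, stackIdx_eq] at h
    omega
  · exact absurd (stackIdx_lt_of_fst_lt m q p h1) (by omega)

lemma stackIdx_injective {M : ℕ} (m : Fin M → ℕ) : Function.Injective (stackIdx m) := by
  intro p q h
  rcases lt_trichotomy p.1 q.1 with h1 | h1 | h1
  · exact absurd (stackIdx_lt_of_fst_lt m p q h1) (by omega)
  · obtain ⟨j, k⟩ := p
    obtain ⟨j', k'⟩ := q
    obtain rfl : j = j' := h1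
    rw [stackIdx_eq, stackIdx_eq] at h
    congr 1
    exact Fin.ext (by simpa using h)
  · exact absurd (stackIdx_lt_of_fst_lt m q p h1) (by omega)

lemma image_stackIdx {M : ℕ} (m : Fin M → ℕ) :
    Finset.univ.image (stackIdx m) = Finset.range (∑ j, m j) := by
  apply Finset.eq_of_subset_of_card_le
  · intro x hx
    obtain ⟨p, -, rfl⟩ := Finset.mem_image.1 hx
    exact Finset.mem_range.2 (stackIdx_lt_sum m p _ (Finset.subset_univ _))
  · rw [Finset.card_image_of_injective _ (stackIdx_injective m)]
    simp

/-- Determinant of a matrix that is upper triangular for the order induced by an injective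
index function. -/
lemma det_of_injective_triangular {n : Type*} [Fintype n] [DecidableEq n] (f : n → ℕ)
    (hf : Function.Injective f) (A : Matrix n n ℂ) (h : ∀ i j, f j < f i → A i j = 0) :
    A.det = ∏ i, A i i := by
  let : LinearOrder n := LinearOrder.lift' f hf
  exact Matrix.det_of_isUpperTriangular (fun i j hij => h i j hij)

lemma newtonPoly_monic {M : ℕ} (lam : Fin M → ℂ) (m : Fin M → ℕ)
    (q : Σ j : Fin M, Fin (m j)) : (newtonPoly lam m q).Monic :=
  (Polynomial.monic_prod_of_monic _ _ fun _ _ => (Polynomial.monic_X_sub_C _).pow _).mul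
    ((Polynomial.monic_X_sub_C _).pow _)

lemma natDegree_newtonPoly {M : ℕ} (lam : Fin M → ℂ) (m : Fin M → ℕ)
    (q : Σ j : Fin M, Fin (m j)) : (newtonPoly lam m q).natDegree = stackIdx m q := by
  rw [newtonPoly, Polynomial.Monic.natDegree_mul
    (Polynomial.monic_prod_of_monic _ _ fun _ _ => (Polynomial.monic_X_sub_C _).pow _)
    ((Polynomial.monic_X_sub_C _).pow _),
    Polynomial.natDegree_prod_of_monic _ _ fun _ _ => (Polynomial.monic_X_sub_C _).pow _,
    stackIdx_eq]
  simp

open Polynomial in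
lemma taylor_newtonPoly {M : ℕ} (lam : Fin M → ℂ) (m : Fin M → ℕ)
    (q : Σ j : Fin M, Fin (m j)) (r : ℂ) :
    taylor r (newtonPoly lam m q) =
      (∏ i ∈ Finset.Iio q.1, (X + C (r - lam i)) ^ m i) * (X + C (r - lam q.1)) ^ (q.2 : ℕ) := by
  have h : ∀ a : ℂ, (X + C r - C a : ℂ[X]) = X + C (r - a) := fun a => by
    rw [C_sub]; ring
  simp [newtonPoly, taylor_apply, mul_comp, prod_comp, h, -map_sub]

/-- In the Newton basis the confluent Vandermonde matrix is lower triangular. -/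
lemma coeff_taylor_newtonPoly_of_lt {M : ℕ} (lam : Fin M → ℂ) (m : Fin M → ℕ)
    (p q : Σ j : Fin M, Fin (m j)) (h : stackIdx m p < stackIdx m q) :
    (Polynomial.taylor (lam p.1) (newtonPoly lam m q)).coeff (p.2 : ℕ) = 0 := by
  rw [taylor_newtonPoly]
  rcases fst_lt_or_of_stackIdx_lt m p q h with h1 | ⟨h1, h2⟩
  · refine Polynomial.X_pow_dvd_iff.1 (Dvd.dvd.mul_right ?_ _) _ p.2.isLt
    have := Finset.dvd_prod_of_mem
      (fun i => (Polynomial.X + Polynomial.C (lam p.1 - lam i)) ^ m i) (Finset.mem_Iio.2 h1)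
    simpa using this
  · refine Polynomial.X_pow_dvd_iff.1 (Dvd.dvd.mul_left ?_ _) _ h2
    simp [h1]

lemma coeff_taylor_newtonPoly_self {M : ℕ} (lam : Fin M → ℂ) (m : Fin M → ℕ)
    (q : Σ j : Fin M, Fin (m j)) :
    (Polynomial.taylor (lam q.1) (newtonPoly lam m q)).coeff (q.2 : ℕ)
      = ∏ i ∈ Finset.Iio q.1, (lam q.1 - lam i) ^ m i := by
  rw [taylor_newtonPoly, sub_self, Polynomial.C_0, add_zero]
  have := Polynomial.coeff_mul_X_pow
    (∏ i ∈ Finset.Iio q.1, (Polynomial.X + Polynomial.C (lam q.1 - lam i)) ^ m i) (q.2 : ℕ) 0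
  rw [zero_add] at this
  rw [this, Polynomial.coeff_zero_eq_eval_zero, Polynomial.eval_prod]
  simp

/-- Expanding a polynomial of degree `< d` in monomials expresses its Taylor coefficient as a row
of the confluent Vandermonde matrix applied to its coefficient vector. -/
lemma sum_choose_mul_coeff {M : ℕ} (m : Fin M → ℕ) (r : ℂ) (k : ℕ) (P : Polynomial ℂ)
    (hP : P.natDegree < ∑ j, m j) :
    ∑ l : Σ j : Fin M, Fin (m j),
        (Nat.choose (stackIdx m l) k : ℂ) * r ^ (stackIdx m l - k) * P.coeff (stackIdx m l)
      = (Polynomial.taylor r P).coeff k := by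
  have h1 := Finset.sum_image (s := Finset.univ) (g := stackIdx m)
    (f := fun l : ℕ => (Nat.choose l k : ℂ) * r ^ (l - k) * P.coeff l)
    ((stackIdx_injective m).injOn)
  rw [← h1, image_stackIdx]
  conv_rhs => rw [P.as_sum_range' _ hP]
  rw [map_sum, Polynomial.finsetSum_coeff]
  refine Finset.sum_congr rfl fun l _ => ?_
  rw [Polynomial.taylor_monomial, Polynomial.coeff_C_mul, Polynomial.coeff_X_add_C_pow]
  ring

lemma confluent_det_eq {M : ℕ} (lam : Fin M → ℂ) (m : Fin M → ℕ) :
    Matrix.det (Matrix.of fun p q : Σ j : Fin M, Fin (m j) =>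
        (Nat.choose (stackIdx m q) (p.2 : ℕ) : ℂ) * lam p.1 ^ (stackIdx m q - (p.2 : ℕ)))
      = ∏ j : Fin M, ∏ k ∈ Finset.Iio j, (lam j - lam k) ^ (m k * m j) := by
  set V : Matrix (Σ j : Fin M, Fin (m j)) (Σ j : Fin M, Fin (m j)) ℂ := Matrix.of fun p q =>
    (Nat.choose (stackIdx m q) (p.2 : ℕ) : ℂ) * lam p.1 ^ (stackIdx m q - (p.2 : ℕ)) with hV
  let U : Matrix (Σ j : Fin M, Fin (m j)) (Σ j : Fin M, Fin (m j)) ℂ := Matrix.of fun l q =>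
    (newtonPoly lam m q).coeff (stackIdx m l)
  have hU : U.det = 1 := by
    rw [det_of_injective_triangular (stackIdx m) (stackIdx_injective m) U]
    · refine Finset.prod_eq_one fun q _ => ?_
      have := (newtonPoly_monic lam m q).coeff_natDegree
      rwa [natDegree_newtonPoly] at this
    · intro l q h
      change (newtonPoly lam m q).coeff (stackIdx m l) = 0
      exact Polynomial.coeff_eq_zero_of_natDegree_lt (by rwa [natDegree_newtonPoly])
  have hVU : ∀ p q, (V * U) p q
      = (Polynomial.taylor (lam p.1) (newtonPoly lam m q)).coeff (p.2 : ℕ) := by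
    intro p q
    rw [← sum_choose_mul_coeff m]
    · rfl
    · rw [natDegree_newtonPoly]
      exact stackIdx_lt_sum m q _ (Finset.subset_univ _)
  have hdet : (V * U).det = ∏ q, (V * U) q q := by
    rw [← Matrix.det_transpose,
      det_of_injective_triangular (stackIdx m) (stackIdx_injective m) (V * U).transpose]
    · rfl
    · intro i j h
      rw [Matrix.transpose_apply, hVU]
      exact coeff_taylor_newtonPoly_of_lt lam m j i h
  rw [Matrix.det_mul, hU, mul_one] at hdet
  rw [hdet, Finset.prod_congr rfl fun q _ =>
    (hVU q q).trans (coeff_taylor_newtonPoly_self lam m q), Fintype.prod_sigma]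
  refine Finset.prod_congr rfl fun j _ => ?_
  dsimp only
  rw [Finset.prod_const, Finset.card_univ, Fintype.card_fin, ← Finset.prod_pow]
  simp_rw [pow_mul]

open Matrix Finset in
/-- **Confluent (second-kind generalized) Vandermonde determinant.** Let `M ≥ 1`, blocks of
sizes `m j ≥ 1` with `∑ j, m j = d`, and the `d × d` matrix `Ṽ` obtained by stacking the blocks
`R_j = (binom(ℓ, k) λ_j^{ℓ-k})_{k < m j, ℓ < d}` (rows and columns indexed by the stacking
order, the entry being `0` whenever `k > ℓ`). Then
`det Ṽ = ∏_{k < j} (λ_j - λ_k)^{m_k m_j}`; in particular `Ṽ` is invertible iff the `λ_j` are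
pairwise distinct. -/
theorem confluent_vandermonde_det (M : ℕ) (hM : 1 ≤ M) (lam : Fin M → ℂ) (m : Fin M → ℕ)
    (hm : ∀ j, 1 ≤ m j) (d : ℕ) (hd : ∑ j, m j = d) :
    Matrix.det (Matrix.of fun p q : Σ j : Fin M, Fin (m j) =>
        (Nat.choose (stackIdx m q) (p.2 : ℕ) : ℂ) * lam p.1 ^ (stackIdx m q - (p.2 : ℕ)))
      = ∏ j : Fin M, ∏ k ∈ Finset.Iio j, (lam j - lam k) ^ (m k * m j) ∧
    (IsUnit (Matrix.det (Matrix.of fun p q : Σ j : Fin M, Fin (m j) =>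
        (Nat.choose (stackIdx m q) (p.2 : ℕ) : ℂ) * lam p.1 ^ (stackIdx m q - (p.2 : ℕ)))) ↔
      Function.Injective lam) := by
  rw [confluent_det_eq]
  refine ⟨rfl, ?_⟩
  rw [isUnit_iff_ne_zero, Finset.prod_ne_zero_iff]
  simp only [Finset.prod_ne_zero_iff, Finset.mem_univ, true_imp_iff, Finset.mem_Iio]
  constructor
  · intro h
    -- The exponents are positive, so a repeated node makes some factor vanish.
    have key : ∀ j k, k < j → lam j ≠ lam k := fun j k hkj e => h j k hkj (by
      rw [e, sub_self]
      exact zero_pow (Nat.mul_pos (hm k) (hm j)).ne')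
    intro a b hab
    rcases lt_trichotomy a b with h1 | h1 | h1
    · exact absurd hab.symm (key b a h1)
    · exact h1
    · exact absurd hab (key a b h1)
  · intro h j k hkj
    exact pow_ne_zero _ (sub_ne_zero.2 fun e => hkj.ne' (h e))
end

section
/- Let A ∈ ℝ^{d×d} and φ ∈ ℝ^d be such that {A^ℓ φ : ℓ = 0, …, L−1} spans ℝ^d, and let α ∈ {−1, 1}. Let x ∈ ℝ^d satisfy ⟨x, A^ℓ φ⟩ ≠ 0 for all ℓ = 0, …, L−1. If y ∈ ℝ^d satisfies |⟨y, A^ℓ φ⟩| = |⟨x, A^ℓ φ⟩| for all ℓ = 0, …, L−1 and |⟨y, A^ℓ(φ + α A φ)⟩| = |⟨x, A^ℓ(φ + α A φ)⟩| for all ℓ = 0, …, L−2, then y = x or y = −x. -/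
/-!
Write `a ℓ = ⟨x, A^ℓ φ⟩` and `b ℓ = ⟨y, A^ℓ φ⟩`. Since `|b ℓ| = |a ℓ|` and `α ≠ 0`, squaring
`|b ℓ + α b (ℓ+1)| = |a ℓ + α a (ℓ+1)|` leaves only the cross terms:
`b ℓ * b (ℓ+1) = a ℓ * a (ℓ+1)`. As no `a ℓ` vanishes, the sign relating `b ℓ` to `a ℓ` is passed
on to the next index, so one sign `ε = ±1` satisfies `b ℓ = ε * a ℓ` for all `ℓ`
(`eq_sign_mul_of_abs_eq`). Then `y - ε x` is orthogonal to a spanning family, hence zero.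
-/

theorem eq_sign_mul_of_abs_eq (L : ℕ) (a b : ℕ → ℝ) (α : ℝ) (hα : α ≠ 0)
    (ha : ∀ ℓ, ℓ < L → a ℓ ≠ 0) (h1 : ∀ ℓ, ℓ < L → |b ℓ| = |a ℓ|)
    (h2 : ∀ ℓ, ℓ + 1 < L → |b ℓ + α * b (ℓ + 1)| = |a ℓ + α * a (ℓ + 1)|) :
    ∃ ε : ℝ, (ε = 1 ∨ ε = -1) ∧ ∀ ℓ, ℓ < L → b ℓ = ε * a ℓ := by
  rcases Nat.eq_zero_or_pos L with rfl | hL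
  · exact ⟨1, Or.inl rfl, fun ℓ h => absurd h (Nat.not_lt_zero ℓ)⟩
  obtain ⟨ε, hε, h0⟩ : ∃ ε : ℝ, (ε = 1 ∨ ε = -1) ∧ b 0 = ε * a 0 := by
    rcases abs_eq_abs.mp (h1 0 hL) with h | h
    · exact ⟨1, Or.inl rfl, by rw [h, one_mul]⟩
    · exact ⟨-1, Or.inr rfl, by rw [h, neg_one_mul]⟩
  refine ⟨ε, hε, fun ℓ => ?_⟩
  induction ℓ with
  | zero => exact fun _ => h0
  | succ k ih =>
    intro hk
    have hk' : k < L := by omega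
    have e0 := sq_eq_sq_iff_abs_eq_abs _ _ |>.mpr (h1 k hk')
    have e1 := sq_eq_sq_iff_abs_eq_abs _ _ |>.mpr (h1 (k + 1) hk)
    have e2 := sq_eq_sq_iff_abs_eq_abs _ _ |>.mpr (h2 k hk)
    have hprod : b k * b (k + 1) = a k * a (k + 1) := by
      apply mul_left_cancel₀ (mul_ne_zero two_ne_zero hα)
      linear_combination e2 - e0 - α ^ 2 * e1
    have hεε : ε * ε = 1 := by rcases hε with rfl | rfl <;> norm_num
    rw [ih hk'] at hprod
    apply mul_left_cancel₀ (ha k hk')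
    linear_combination ε * hprod - a k * b (k + 1) * hεε

open Matrix in
theorem eq_zero_of_dotProduct_eq_zero_of_span_eq_top {d : ℕ} {ι : Type*} (v : ι → Fin d → ℝ)
    (hspan : Submodule.span ℝ (Set.range v) = ⊤) (z : Fin d → ℝ) (hz : ∀ i, z ⬝ᵥ v i = 0) :
    z = 0 := by
  have key : ∀ w ∈ Submodule.span ℝ (Set.range v), z ⬝ᵥ w = 0 := by
    intro w hw
    induction hw using Submodule.span_induction with
    | mem w hw => obtain ⟨i, rfl⟩ := hw; exact hz i
    | zero => exact dotProduct_zero z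
    | add u w _ _ hu hw => rw [dotProduct_add, hu, hw, add_zero]
    | smul c w _ hw => rw [dotProduct_smul, hw, smul_zero]
  exact dotProduct_self_eq_zero.mp (key z (hspan ▸ Submodule.mem_top))

open Matrix in
/-- **Real phase retrieval in dynamical sampling (almost every signal).** Let
`{A^ℓ φ}_{ℓ=0}^{L-1}` span `ℝ^d` and `α ∈ {-1, 1}`. If `⟨x, A^ℓ φ⟩ ≠ 0` for all
`ℓ = 0, …, L-1`, and `y` produces the same magnitudes `|⟨·, A^ℓ φ⟩|` (`ℓ = 0, …, L-1`) and
`|⟨·, A^ℓ(φ + α A φ)⟩|` (`ℓ = 0, …, L-2`) as `x`, then `y = x` or `y = -x`. -/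
theorem phase_retrieval_dynamical_real_ae (d L : ℕ)
    (A : Matrix (Fin d) (Fin d) ℝ) (φ : Fin d → ℝ)
    (hspan : Submodule.span ℝ (Set.range fun ℓ : Fin L => (A ^ (ℓ : ℕ)).mulVec φ) = ⊤)
    (α : ℝ) (hα : α = -1 ∨ α = 1)
    (x y : Fin d → ℝ)
    (hx : ∀ ℓ : ℕ, ℓ < L → x ⬝ᵥ (A ^ ℓ).mulVec φ ≠ 0)
    (h1 : ∀ ℓ : ℕ, ℓ < L →
      |y ⬝ᵥ (A ^ ℓ).mulVec φ| = |x ⬝ᵥ (A ^ ℓ).mulVec φ|)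
    (h2 : ∀ ℓ : ℕ, ℓ + 1 < L →
      |y ⬝ᵥ (A ^ ℓ).mulVec (φ + α • A.mulVec φ)|
        = |x ⬝ᵥ (A ^ ℓ).mulVec (φ + α • A.mulVec φ)|) :
    y = x ∨ y = -x := by
  have hα0 : α ≠ 0 := by rcases hα with rfl | rfl <;> norm_num
  have hexp : ∀ (z : Fin d → ℝ) (ℓ : ℕ), z ⬝ᵥ (A ^ ℓ).mulVec (φ + α • A.mulVec φ)
      = z ⬝ᵥ (A ^ ℓ).mulVec φ + α * z ⬝ᵥ (A ^ (ℓ + 1)).mulVec φ := by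
    intro z ℓ
    rw [mulVec_add, mulVec_smul, mulVec_mulVec, ← pow_succ, dotProduct_add, dotProduct_smul,
      smul_eq_mul]
  obtain ⟨ε, hε, h⟩ := eq_sign_mul_of_abs_eq L (fun ℓ => x ⬝ᵥ (A ^ ℓ).mulVec φ)
    (fun ℓ => y ⬝ᵥ (A ^ ℓ).mulVec φ) α hα0 hx h1
    (fun ℓ hℓ => by simpa only [hexp] using h2 ℓ hℓ)
  have hy : y - ε • x = 0 := by
    refine eq_zero_of_dotProduct_eq_zero_of_span_eq_top _ hspan _ fun ℓ => ?_
    rw [sub_dotProduct, smul_dotProduct, smul_eq_mul, sub_eq_zero]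
    exact h ℓ ℓ.isLt
  rw [sub_eq_zero] at hy
  rcases hε with rfl | rfl
  · exact Or.inl (by rw [hy, one_smul])
  · exact Or.inr (by rw [hy, neg_one_smul])
end
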